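/- arXiv:1506.02924 — 2 statements merged into one kernel-verified Lean document; each statement's English description precedes it below -/
import Mathlib

section
/- Let R be a ring, E a left R-module, and U a pure submodule of E. Then the following are equivalent: (1) for every FP-injective module E containing U purely, E/U is FP-injective; (2) for every injective hull E of U (with U pure in E), E/U is FP-injective. -/
universe u v

/-- `N` is a pure submodule of `M`: every finite system of linear equations with
constant terms in `N` which is solvable in `M` is solvable in `N`
(equivalently, `- ⊗ N → - ⊗ M` stays injective). -/
def IsPureSubmodule (R : Type u) [Ring R] {M : Type v} [AddCommGroup M] [Module R M]
    (N : Submodule R M) : Prop :=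
  ∀ (k l : ℕ) (a : Fin k → Fin l → R) (e : Fin k → N),
    (∃ x : Fin l → M, ∀ i, ∑ j, a i j • x j = (e i : M)) →
    ∃ y : Fin l → N, ∀ i, ∑ j, a i j • (y j : M) = (e i : M)

/-- `N` is an RD-pure (relatively divisible) submodule of `M`: `rM ∩ N = rN` for all `r`. -/
def IsRDPureSubmodule (R : Type u) [Ring R] {M : Type v} [AddCommGroup M] [Module R M]
    (N : Submodule R M) : Prop :=
  ∀ (r : R) (n : M), n ∈ N → (∃ m : M, r • m = n) → ∃ n' ∈ N, r • n' = n

/-- `N` is an essential submodule of `M`. -/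
def IsEssentialSubmodule (R : Type u) [Ring R] {M : Type v} [AddCommGroup M] [Module R M]
    (N : Submodule R M) : Prop :=
  ∀ K : Submodule R M, K ⊓ N = ⊥ → K = ⊥

/-- `M` is a pure-essential extension of its submodule `N`. -/
def IsPureEssential (R : Type u) [Ring R] {M : Type v} [AddCommGroup M] [Module R M]
    (N : Submodule R M) : Prop :=
  IsPureSubmodule R N ∧ ∀ K : Submodule R M, K ≠ ⊥ → K ⊓ N = ⊥ →
    ¬ IsPureSubmodule R (N.map K.mkQ)

/-- `M` is an RD-essential extension of its submodule `N`. -/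
def IsRDEssential (R : Type u) [Ring R] {M : Type v} [AddCommGroup M] [Module R M]
    (N : Submodule R M) : Prop :=
  IsRDPureSubmodule R N ∧ ∀ K : Submodule R M, K ≠ ⊥ → K ⊓ N = ⊥ →
    ¬ IsRDPureSubmodule R (N.map K.mkQ)

/-- `M` is pure-injective: injective relative to pure monomorphisms. -/
def IsPureInjective (R : Type u) [Ring R] (M : Type v) [AddCommGroup M] [Module R M] : Prop :=
  ∀ (A B : Type v) [AddCommGroup A] [Module R A] [AddCommGroup B] [Module R B]
    (f : A →ₗ[R] B), Function.Injective f → IsPureSubmodule R (LinearMap.range f) →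
    ∀ g : A →ₗ[R] M, ∃ h : B →ₗ[R] M, h ∘ₗ f = g

/-- `M` is RD-injective: injective relative to RD-pure monomorphisms. -/
def IsRDInjective (R : Type u) [Ring R] (M : Type v) [AddCommGroup M] [Module R M] : Prop :=
  ∀ (A B : Type v) [AddCommGroup A] [Module R A] [AddCommGroup B] [Module R B]
    (f : A →ₗ[R] B), Function.Injective f → IsRDPureSubmodule R (LinearMap.range f) →
    ∀ g : A →ₗ[R] M, ∃ h : B →ₗ[R] M, h ∘ₗ f = g

/-- `Ext¹_R(F, M) = 0`, phrased as: every short exact sequence `0 → M → X → F → 0` splits. -/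
def Ext1Vanishes (R : Type u) [Ring R] (F : Type v) [AddCommGroup F] [Module R F]
    (M : Type v) [AddCommGroup M] [Module R M] : Prop :=
  ∀ (X : Type v) [AddCommGroup X] [Module R X] (i : M →ₗ[R] X) (p : X →ₗ[R] F),
    Function.Injective i → Function.Surjective p → LinearMap.ker p = LinearMap.range i →
    ∃ s : X →ₗ[R] M, s ∘ₗ i = LinearMap.id

/-- `M` is FP-injective: `Ext¹(F, M) = 0` for every finitely presented `F`. -/
def IsFPInjective (R : Type u) [Ring R] (M : Type v) [AddCommGroup M] [Module R M] : Prop :=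
  ∀ (F : Type v) [AddCommGroup F] [Module R F], Module.FinitePresentation R F →
    Ext1Vanishes R F M

/-- `M` is P-flat: `Tor₁(R/rR, M) = 0` for every `r`, i.e. `rm = 0` implies
`m ∈ (right annihilator of r) • M`. -/
def IsPFlat (R : Type u) [Ring R] (M : Type v) [AddCommGroup M] [Module R M] : Prop :=
  ∀ (r : R) (m : M), r • m = 0 →
    m ∈ Submodule.span R {x : M | ∃ s : R, ∃ y : M, r * s = 0 ∧ x = s • y}

/-- `M` is a flat left module (equational criterion of flatness, valid over any ring). -/
def IsFlatMod (R : Type u) [Ring R] (M : Type v) [AddCommGroup M] [Module R M] : Prop :=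
  ∀ (k : ℕ) (a : Fin k → R) (x : Fin k → M), (∑ i, a i • x i) = 0 →
    ∃ (l : ℕ) (b : Fin k → Fin l → R) (y : Fin l → M),
      (∀ i, x i = ∑ j, b i j • y j) ∧ ∀ j, (∑ i, a i * b i j) = 0

/-- `M` is semi-compact: every finitely solvable system of congruences
`x ≡ x_α (mod M[I_α])` has a simultaneous solution. -/
def IsSemiCompact (R : Type u) [Ring R] (M : Type v) [AddCommGroup M] [Module R M] : Prop :=
  ∀ (ι : Type v) (x : ι → M) (I : ι → Ideal R),
    (∀ s : Finset ι, ∃ m : M, ∀ i ∈ s, ∀ a ∈ I i, a • (m - x i) = 0) →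
    ∃ m : M, ∀ i, ∀ a ∈ I i, a • (m - x i) = 0

/-!
An FP-injective module is pure in every module containing it, so a pure submodule `U` of an
FP-injective module `E` is pure in its injective hull `H` as well. Since `H` is injective, the
inclusion `U → H` extends to some `g : E → H`. The sequence `0 → E → H × E ⧸ U → H ⧸ U → 0`, with
maps `e ↦ (g e, [e])` and `(x, [e]) ↦ [x - g e]`, is exact. As FP-injective modules are closed under
extensions and direct summands, `E ⧸ U` is FP-injective whenever `H ⧸ U` is.
-/

section Exact

variable {R : Type*} [Ring R] {A B C : Type*} [AddCommGroup A] [Module R A]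
  [AddCommGroup B] [Module R B] [AddCommGroup C] [Module R C]
  {f : A →ₗ[R] B} {g : B →ₗ[R] C}

theorem exists_lift_of_exact {M : Type*} [AddCommMonoid M] [Module R M]
    (hf : Function.Injective f) (hfg : Function.Exact f g)
    (φ : M →ₗ[R] B) (hφ : g ∘ₗ φ = 0) : ∃ ψ : M →ₗ[R] A, f ∘ₗ ψ = φ := by
  have hmem (m : M) : φ m ∈ LinearMap.range f := (hfg _).1 (LinearMap.congr_fun hφ m)
  refine ⟨(LinearEquiv.ofInjective f hf).symm ∘ₗ φ.codRestrict _ hmem, LinearMap.ext fun m => ?_⟩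
  exact congrArg Subtype.val ((LinearEquiv.ofInjective f hf).apply_symm_apply ⟨φ m, hmem m⟩)

theorem exists_desc_of_exact {M : Type*} [AddCommGroup M] [Module R M]
    (hg : Function.Surjective g) (hfg : Function.Exact f g)
    (φ : B →ₗ[R] M) (hφ : φ ∘ₗ f = 0) : ∃ ψ : C →ₗ[R] M, ψ ∘ₗ g = φ := by
  refine ⟨(LinearMap.range f).liftQ φ (LinearMap.range_le_ker_iff.2 hφ) ∘ₗ
    (hfg.linearEquivOfSurjective hg).symm, LinearMap.ext fun b => ?_⟩
  simp

end Exact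

section Ext1Vanishes

variable {R : Type u} [Ring R] {F M : Type v} [AddCommGroup F] [Module R F]
  [AddCommGroup M] [Module R M]

theorem Ext1Vanishes.exists_retraction (h : Ext1Vanishes R F M) {X : Type*} [AddCommGroup X]
    [Module R X] [Small.{v} X] {i : M →ₗ[R] X} {p : X →ₗ[R] F} (hi : Function.Injective i)
    (hp : Function.Surjective p) (hip : Function.Exact i p) :
    ∃ s : X →ₗ[R] M, s ∘ₗ i = LinearMap.id := by
  let e := Shrink.linearEquiv.{v} R X
  obtain ⟨s, hs⟩ := h (Shrink.{v} X) (e.symm ∘ₗ i) (p ∘ₗ e) (e.symm.injective.comp hi)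
    (hp.comp e.surjective) <| LinearMap.exact_iff.1 fun x => by
      simp [hip (e x), LinearEquiv.symm_apply_eq]
  exact ⟨s ∘ₗ e.symm, hs⟩

variable {K P : Type*} [AddCommGroup K] [Module R K] [AddCommGroup P] [Module R P]
  {k : K →ₗ[R] P} {q : P →ₗ[R] F}

-- The pushout of `k` along `f` is an extension of `F` by `M`; a retraction of it extends `f`.
theorem Ext1Vanishes.exists_extend [Small.{v} P] (h : Ext1Vanishes R F M)
    (hk : Function.Injective k) (hq : Function.Surjective q) (hkq : Function.Exact k q)
    (f : K →ₗ[R] M) : ∃ g : P →ₗ[R] M, g ∘ₗ k = f := by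
  let S : Submodule R (M × P) := LinearMap.range (f.prod (-k))
  have hS : S ≤ LinearMap.ker (q ∘ₗ LinearMap.snd R M P) := by
    rintro _ ⟨x, rfl⟩
    simp [hkq.apply_apply_eq_zero]
  let i : M →ₗ[R] (M × P) ⧸ S := S.mkQ ∘ₗ LinearMap.inl R M P
  let p : ((M × P) ⧸ S) →ₗ[R] F := S.liftQ _ hS
  have comm (x : K) : S.mkQ (0, k x) = i (f x) :=
    (Submodule.Quotient.eq S).2 ⟨-x, by simp⟩
  have hi : Function.Injective i := by
    refine (injective_iff_map_eq_zero i).2 fun m hm => ?_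
    obtain ⟨x, hx⟩ := (Submodule.Quotient.mk_eq_zero S).1 hm
    obtain ⟨rfl, hkx⟩ : f x = m ∧ k x = 0 := by simpa [Prod.ext_iff] using hx
    rw [(map_eq_zero_iff k hk).1 hkx, map_zero]
  have hp : Function.Surjective p := fun y => by
    obtain ⟨v, rfl⟩ := hq y
    exact ⟨S.mkQ (0, v), by simp [p]⟩
  have hip : Function.Exact i p := by
    refine LinearMap.exact_of_comp_of_mem_range (by ext; simp [i, p]) fun y hy => ?_
    obtain ⟨⟨m, v⟩, rfl⟩ := S.mkQ_surjective y
    obtain ⟨x, rfl⟩ := (hkq v).1 (by simpa [p] using hy)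
    refine ⟨m + f x, ?_⟩
    rw [map_add, ← comm]
    exact (map_add S.mkQ (m, 0) (0, k x)).symm.trans (by simp)
  obtain ⟨s, hs⟩ := h.exists_retraction hi hp hip
  refine ⟨s ∘ₗ S.mkQ ∘ₗ LinearMap.inr R M P, LinearMap.ext fun x => ?_⟩
  simpa [← comm] using LinearMap.congr_fun hs (f x)

theorem ext1Vanishes_of_forall_exists_extend [Module.Projective R P] (hq : Function.Surjective q)
    (hkq : Function.Exact k q) (h : ∀ f : K →ₗ[R] M, ∃ g : P →ₗ[R] M, g ∘ₗ k = f) :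
    Ext1Vanishes R F M := by
  intro X _ _ i p hi hp hip
  rw [← LinearMap.exact_iff] at hip
  obtain ⟨l, hl⟩ := Module.projective_lifting_property p q hp
  obtain ⟨f, hf⟩ := exists_lift_of_exact hi hip (l ∘ₗ k) <| by
    rw [← LinearMap.comp_assoc, hl, hkq.linearMap_comp_eq_zero]
  obtain ⟨g, rfl⟩ := h f
  obtain ⟨c, hc⟩ := exists_desc_of_exact hq hkq (l - i ∘ₗ g) <| by
    rw [LinearMap.sub_comp, LinearMap.comp_assoc, hf, sub_self]
  have hpc : p ∘ₗ c = LinearMap.id := by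
    rw [← LinearMap.cancel_right hq, LinearMap.comp_assoc, hc, LinearMap.comp_sub, hl,
      ← LinearMap.comp_assoc, hip.linearMap_comp_eq_zero, LinearMap.zero_comp, sub_zero,
      LinearMap.id_comp]
  exact ((hip.split_tfae hi hp).out 0 1 rfl rfl).1 ⟨c, hpc⟩

theorem ext1Vanishes_iff_exists_extend [Small.{v} P] [Module.Projective R P]
    (hk : Function.Injective k) (hq : Function.Surjective q) (hkq : Function.Exact k q) :
    Ext1Vanishes R F M ↔ ∀ f : K →ₗ[R] M, ∃ g : P →ₗ[R] M, g ∘ₗ k = f :=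
  ⟨fun h f => h.exists_extend hk hq hkq f, ext1Vanishes_of_forall_exists_extend hq hkq⟩

theorem ext1Vanishes_iff_exists_extend_ker [Small.{v} R] :
    Ext1Vanishes R F M ↔
      ∀ f : LinearMap.ker (Finsupp.linearCombination R (id : F → F)) →ₗ[R] M,
        ∃ g : (F →₀ R) →ₗ[R] M, g ∘ₗ Submodule.subtype _ = f :=
  have : Small.{v} (F →₀ R) := small_of_injective DFunLike.coe_injective
  ext1Vanishes_iff_exists_extend (Submodule.subtype_injective _)
    (Finsupp.linearCombination_id_surjective R F) (LinearMap.exact_subtype_ker_map _)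

variable [Small.{v} R] {A B : Type v} [AddCommGroup A] [Module R A] [AddCommGroup B] [Module R B]

theorem Ext1Vanishes.of_retract (h : Ext1Vanishes R F M) {s : A →ₗ[R] M} {r : M →ₗ[R] A}
    (hrs : r ∘ₗ s = LinearMap.id) : Ext1Vanishes R F A := by
  rw [ext1Vanishes_iff_exists_extend_ker] at h ⊢
  intro f
  obtain ⟨g, hg⟩ := h (s ∘ₗ f)
  exact ⟨r ∘ₗ g, by rw [LinearMap.comp_assoc, hg, ← LinearMap.comp_assoc, hrs, LinearMap.id_comp]⟩

theorem Ext1Vanishes.of_exact {a : A →ₗ[R] M} {b : M →ₗ[R] B} (ha : Function.Injective a)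
    (hb : Function.Surjective b) (hab : Function.Exact a b) (hA : Ext1Vanishes R F A)
    (hB : Ext1Vanishes R F B) : Ext1Vanishes R F M := by
  rw [ext1Vanishes_iff_exists_extend_ker] at hA hB ⊢
  intro f
  obtain ⟨φ, hφ⟩ := hB (b ∘ₗ f)
  obtain ⟨ψ, rfl⟩ := Module.projective_lifting_property b φ hb
  obtain ⟨d, hd⟩ := exists_lift_of_exact ha hab (f - ψ ∘ₗ Submodule.subtype _) <| by
    rw [LinearMap.comp_sub, ← LinearMap.comp_assoc, hφ, sub_self]
  obtain ⟨χ, rfl⟩ := hA d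
  refine ⟨ψ + a ∘ₗ χ, ?_⟩
  rw [LinearMap.add_comp, LinearMap.comp_assoc, hd, add_sub_cancel]

end Ext1Vanishes

section Pure

variable {R : Type*} [Ring R] {U M N : Type*} [AddCommGroup U] [Module R U]
  [AddCommGroup M] [Module R M] [AddCommGroup N] [Module R N]

theorem isPureSubmodule_range_iff {i : U →ₗ[R] M} (hi : Function.Injective i) :
    IsPureSubmodule R (LinearMap.range i) ↔
      ∀ (m n : ℕ) (a : Fin m → Fin n → R) (c : Fin m → U),
        (∃ x : Fin n → M, ∀ r, ∑ s, a r s • x s = i (c r)) →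
        ∃ y : Fin n → U, ∀ r, ∑ s, a r s • y s = c r := by
  let e := LinearEquiv.ofInjective i hi
  have he (y) : i (e.symm y) = y := congrArg Subtype.val (e.apply_symm_apply y)
  constructor
  · intro h m n a c hc
    obtain ⟨y, hy⟩ := h m n a (fun r => e (c r)) hc
    refine ⟨fun s => e.symm (y s), fun r => hi ?_⟩
    simpa [he] using show _ = i (c r) from hy r
  · intro h m n a c hc
    obtain ⟨y, hy⟩ := h m n a (fun r => e.symm (c r)) (by simpa [he] using hc)
    refine ⟨fun s => e (y s), fun r => ?_⟩
    rw [← he, ← hy r]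
    simp [e]

theorem IsPureSubmodule.range_comp {i : U →ₗ[R] M} {f : M →ₗ[R] N} (hi : Function.Injective i)
    (hf : Function.Injective f) (hip : IsPureSubmodule R (LinearMap.range i))
    (hfp : IsPureSubmodule R (LinearMap.range f)) :
    IsPureSubmodule R (LinearMap.range (f ∘ₗ i)) := by
  rw [isPureSubmodule_range_iff] at hip hfp ⊢
  exacts [fun m n a c hc => hip m n a c (hfp m n a _ hc), hf.comp hi, hf, hi]

theorem IsPureSubmodule.range_of_comp {i : U →ₗ[R] M} {f : M →ₗ[R] N}
    (hfi : Function.Injective (f ∘ₗ i)) (h : IsPureSubmodule R (LinearMap.range (f ∘ₗ i))) :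
    IsPureSubmodule R (LinearMap.range i) := by
  rw [isPureSubmodule_range_iff hfi] at h
  rw [isPureSubmodule_range_iff (Function.Injective.of_comp hfi)]
  rintro m n a c ⟨x, hx⟩
  exact h m n a c ⟨f ∘ x, fun r => by simp [← hx]⟩

end Pure

theorem exists_maximal_disjoint_ge {α : Type*} [CompleteLattice α] [IsCompactlyGenerated α]
    {a b : α} (hab : Disjoint a b) : ∃ c, a ≤ c ∧ Maximal (Disjoint · b) c := by
  refine zorn_le_nonempty₀ {c | Disjoint c b} (fun s hs hchain _ _ => ?_) a hab
  exact ⟨sSup s, hchain.directedOn.disjoint_sSup_left.2 fun _ hc => hs hc, fun _ hc => le_sSup hc⟩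

section InjectiveHull

variable {R : Type u} [Ring R] {M : Type v} [AddCommGroup M] [Module R M]

theorem module_injective_of_retract {N : Type v} [AddCommGroup N] [Module R N]
    [hM : Module.Injective R M] {s : N →ₗ[R] M} {r : M →ₗ[R] N} (hrs : r ∘ₗ s = LinearMap.id) :
    Module.Injective R N where
  out _ _ _ _ _ _ f hf g := by
    obtain ⟨h, hh⟩ := hM.out f hf (s ∘ₗ g)
    exact ⟨r ∘ₗ h, fun x => by simpa [hh] using LinearMap.congr_fun hrs (g x)⟩

variable {N H C : Submodule R M}

theorem isEssentialSubmodule_comap_subtype (hNH : N ≤ H) (hHC : Disjoint H C)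
    (hC : Maximal (Disjoint · N) C) : IsEssentialSubmodule R (N.comap H.subtype) := by
  intro K hK
  have hKH : K.map H.subtype ≤ H := Submodule.map_subtype_le H K
  have hNK : Disjoint N (K.map H.subtype) := by
    rw [disjoint_comm, disjoint_iff, Submodule.map_inf_eq_map_inf_comap, hK, Submodule.map_bot]
  have hsup : Disjoint (K.map H.subtype ⊔ C) N :=
    (hNK.disjoint_sup_right_of_disjoint_sup_left (hHC.mono_left (sup_le hNH hKH))).symm
  have hKC : K.map H.subtype ≤ C := le_sup_left.trans (hC.2 hsup le_sup_right)
  refine Submodule.map_injective_of_injective H.subtype_injective ?_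
  rw [Submodule.map_bot]
  exact (hHC.mono_left hKH).eq_bot_of_le hKC

-- Extending `H → M` along `H → M ⧸ C` gives an endomorphism `π` of `M` fixing `H` and killing `C`.
-- Maximality of `C` gives `π ⁻¹ C = C`, so the range of `π` meets `C` trivially, and maximality of
-- `H` then makes `π` a retraction onto `H`.
theorem module_injective_of_maximal_disjoint [hM : Module.Injective R M]
    (hC : Maximal (Disjoint · H) C) (hH : Maximal (Disjoint · C) H) : Module.Injective R H := by
  have hinj : Function.Injective (C.mkQ ∘ₗ H.subtype) := by
    rw [← LinearMap.ker_eq_bot, LinearMap.ker_comp, Submodule.ker_mkQ]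
    exact Submodule.disjoint_iff_comap_eq_bot.1 hH.1
  obtain ⟨φ, hφ⟩ := hM.out _ hinj H.subtype
  let π : M →ₗ[R] M := φ ∘ₗ C.mkQ
  have hπH (x : M) (hx : x ∈ H) : π x = x := hφ ⟨x, hx⟩
  have hπC (x : M) (hx : x ∈ C) : π x = 0 := by
    simp [π, (Submodule.Quotient.mk_eq_zero C).2 hx]
  have hcomap : C.comap π ≤ C := by
    refine hC.2 (Submodule.disjoint_def.2 fun x hxC hxH => ?_) fun x hx => ?_
    · rw [Submodule.mem_comap, hπH x hxH] at hxC
      exact Submodule.disjoint_def.1 hC.1 x hxC hxH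
    · rw [Submodule.mem_comap, hπC x hx]
      exact C.zero_mem
  have hrange : LinearMap.range π ≤ H := by
    refine hH.2 (Submodule.disjoint_def.2 ?_) fun x hx => ⟨x, hπH x hx⟩
    rintro _ ⟨x, rfl⟩ hx
    exact hπC x (hcomap hx)
  exact module_injective_of_retract (s := H.subtype)
    (r := π.codRestrict H fun x => hrange ⟨x, rfl⟩)
    (LinearMap.ext fun x => Subtype.ext (hπH x x.2))

variable (R M) [Small.{v} R]

theorem exists_injective_embedding :
    ∃ (I : Type v) (_ : AddCommGroup I) (_ : Module R I) (i : M →ₗ[R] I),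
      Function.Injective i ∧ Module.Injective R I := by
  obtain ⟨J⟩ := CategoryTheory.EnoughInjectives.presentation (ModuleCat.of R M)
  have := J.injective
  exact ⟨J.J, _, _, J.f.hom, (ModuleCat.mono_iff_injective J.f).1 J.mono,
    Module.injective_module_of_injective_object R J.J⟩

theorem exists_injective_hull :
    ∃ (H : Type v) (_ : AddCommGroup H) (_ : Module R H) (j : M →ₗ[R] H),
      Function.Injective j ∧ Module.Injective R H ∧
        IsEssentialSubmodule R (LinearMap.range j) := by
  obtain ⟨I, _, _, i, hi, _⟩ := exists_injective_embedding R M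
  obtain ⟨C, -, hC⟩ := exists_maximal_disjoint_ge (disjoint_bot_left (a := LinearMap.range i))
  obtain ⟨H, hiH, hH⟩ := exists_maximal_disjoint_ge hC.1.symm
  have hCH : Maximal (Disjoint · H) C :=
    ⟨hH.1.symm, fun _ hD => hC.2 (hD.mono_right hiH)⟩
  refine ⟨H, _, _, i.codRestrict H fun m => hiH ⟨m, rfl⟩, ?_,
    module_injective_of_maximal_disjoint hCH hH, ?_⟩
  · exact fun x y hxy => hi (congrArg Subtype.val hxy)
  · rw [LinearMap.range_codRestrict]
    exact isEssentialSubmodule_comap_subtype hiH hH.1 hC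

end InjectiveHull

section FPInjective

variable {R : Type u} [Ring R] {M : Type v} [AddCommGroup M] [Module R M]

theorem isFPInjective_of_injective [hM : Module.Injective R M] : IsFPInjective R M := by
  intro F _ _ _ X _ _ i p hi _ _
  obtain ⟨s, hs⟩ := hM.out i hi LinearMap.id
  exact ⟨s, LinearMap.ext hs⟩

theorem IsFPInjective.exists_extend (h : IsFPInjective R M) {P : Type*} [AddCommGroup P]
    [Module R P] [Small.{v} P] [Module.FinitePresentation R P] {K : Submodule R P} (hK : K.FG)
    (f : K →ₗ[R] M) : ∃ g : P →ₗ[R] M, g ∘ₗ K.subtype = f := by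
  let e := Shrink.linearEquiv.{v} R (P ⧸ K)
  have : Module.FinitePresentation R (P ⧸ K) :=
    Module.finitePresentation_of_surjective K.mkQ K.mkQ_surjective (by simpa using hK)
  have : Module.FinitePresentation R (Shrink.{v} (P ⧸ K)) := .of_equiv e.symm
  refine (h _ this).exists_extend (q := e.symm ∘ₗ K.mkQ) K.subtype_injective
    (e.symm.surjective.comp K.mkQ_surjective) ?_ f
  exact (LinearEquiv.postcomp_exact_iff_exact).2 (LinearMap.exact_subtype_mkQ K)

variable [Small.{v} R]

theorem IsFPInjective.of_retract (h : IsFPInjective R M) {A : Type v} [AddCommGroup A] [Module R A]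
    {s : A →ₗ[R] M} {r : M →ₗ[R] A} (hrs : r ∘ₗ s = LinearMap.id) : IsFPInjective R A :=
  fun F _ _ hF => (h F hF).of_retract hrs

theorem IsFPInjective.of_exact {A B : Type v} [AddCommGroup A] [Module R A] [AddCommGroup B]
    [Module R B] {a : A →ₗ[R] M} {b : M →ₗ[R] B} (ha : Function.Injective a)
    (hb : Function.Surjective b) (hab : Function.Exact a b) (hA : IsFPInjective R A)
    (hB : IsFPInjective R B) : IsFPInjective R M :=
  fun F _ _ hF => .of_exact ha hb hab (hA F hF) (hB F hF)

theorem IsFPInjective.isPureSubmodule_range (h : IsFPInjective R M) {H : Type*} [AddCommGroup H]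
    [Module R H] {j : M →ₗ[R] H} (hj : Function.Injective j) :
    IsPureSubmodule R (LinearMap.range j) := by
  rw [isPureSubmodule_range_iff hj]
  rintro m n a c ⟨x, hx⟩
  let φ : (Fin n → R) →ₗ[R] H := Fintype.linearCombination R x
  have hφ (r) : φ (a r) = j (c r) := hx r
  let K : Submodule R (Fin n → R) := Submodule.span R (Set.range a)
  have hK : K ≤ (LinearMap.range j).comap φ :=
    Submodule.span_le.2 (Set.range_subset_iff.2 fun r => ⟨c r, (hφ r).symm⟩)
  obtain ⟨f, hf⟩ := exists_lift_of_exact hj j.exact_map_mkQ_range (φ ∘ₗ K.subtype) <|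
    LinearMap.ext fun v => by simpa using hK v.2
  obtain ⟨g, rfl⟩ := h.exists_extend (Submodule.fg_span (Set.finite_range a)) f
  refine ⟨fun s => g (Pi.single s 1), fun r => hj ?_⟩
  calc j (∑ s, a r s • g (Pi.single s 1)) = j (g (a r)) := by
        conv_rhs => rw [pi_eq_sum_univ' (a r), map_sum]
        simp only [map_smul]
    _ = φ (a r) := LinearMap.congr_fun hf ⟨a r, Submodule.subset_span ⟨r, rfl⟩⟩
    _ = j (c r) := hφ r

theorem IsPureSubmodule.range_of_isFPInjective {U H : Type*} [AddCommGroup U] [Module R U]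
    [AddCommGroup H] [Module R H] {i : U →ₗ[R] M} (hi : Function.Injective i)
    (hip : IsPureSubmodule R (LinearMap.range i)) (hM : IsFPInjective R M) {j : U →ₗ[R] H}
    (hj : Function.Injective j) : IsPureSubmodule R (LinearMap.range j) := by
  obtain ⟨I, _, _, ι, hι, _⟩ := exists_injective_embedding R M
  obtain ⟨f, hf⟩ := Module.Injective.extension_property R I U H j hj (ι ∘ₗ i)
  refine .range_of_comp (f := f) (hf ▸ hι.comp hi) ?_
  exact hf ▸ hip.range_comp hi hι (hM.isPureSubmodule_range hι)

theorem IsFPInjective.quotient_of_map {H : Type v} [AddCommGroup H] [Module R H]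
    {U : Submodule R M} (hM : IsFPInjective R M) (g : M →ₗ[R] H) (hg : Disjoint U (LinearMap.ker g))
    (hH : IsFPInjective R (H ⧸ U.map g)) : IsFPInjective R (M ⧸ U) := by
  let a : M →ₗ[R] H × (M ⧸ U) := g.prod U.mkQ
  let b : H × (M ⧸ U) →ₗ[R] H ⧸ U.map g :=
    (U.map g).mkQ.coprod (-U.mapQ (U.map g) g (Submodule.le_comap_map g U))
  have ha : Function.Injective a := by
    rw [← LinearMap.ker_eq_bot, LinearMap.ker_prod, Submodule.ker_mkQ]
    exact hg.symm.eq_bot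
  have hb : Function.Surjective b := fun y => by
    obtain ⟨x, rfl⟩ := (U.map g).mkQ_surjective y
    exact ⟨(x, 0), by simp [b]⟩
  have hab : Function.Exact a b := by
    refine LinearMap.exact_of_comp_of_mem_range (by ext; simp [a, b]) ?_
    rintro ⟨x, y⟩ hxy
    obtain ⟨m, rfl⟩ := U.mkQ_surjective y
    obtain ⟨u, hu, hgu⟩ : x - g m ∈ U.map g := by
      rw [← Submodule.Quotient.mk_eq_zero]
      simpa [b, sub_eq_add_neg] using hxy
    refine ⟨m + u, Prod.ext ?_ ?_⟩
    · simp [a, hgu]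
    · simpa [a] using hu
  exact (hM.of_exact ha hb hab hH).of_retract (LinearMap.snd_comp_inr R H (M ⧸ U))

theorem IsFPInjective.quotient_range_of_injective {U : Type*} [AddCommGroup U] [Module R U]
    {H : Type v} [AddCommGroup H] [Module R H] [Module.Injective R H] (hM : IsFPInjective R M)
    {i : U →ₗ[R] M} {j : U →ₗ[R] H} (hi : Function.Injective i) (hj : Function.Injective j)
    (hH : IsFPInjective R (H ⧸ LinearMap.range j)) :
    IsFPInjective R (M ⧸ LinearMap.range i) := by
  obtain ⟨g, rfl⟩ := Module.Injective.extension_property R H U M i hi j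
  refine hM.quotient_of_map g (LinearMap.disjoint_ker.2 ?_) (LinearMap.range_comp i g ▸ hH)
  rintro _ ⟨u, rfl⟩ hu
  rw [(map_eq_zero_iff (g ∘ₗ i) hj).1 hu, map_zero]

end FPInjective

theorem fp_injective_quotient_tfae_general (R : Type u) [Ring R] [Small.{v} R]
    (U : Type v) [AddCommGroup U] [Module R U] :
    (∀ (E : Type v) [AddCommGroup E] [Module R E] (i : U →ₗ[R] E),
      Function.Injective i → IsPureSubmodule R (LinearMap.range i) →
      IsFPInjective R E → IsFPInjective R (E ⧸ LinearMap.range i)) ↔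
    (∀ (E : Type v) [AddCommGroup E] [Module R E] (i : U →ₗ[R] E),
      Function.Injective i → IsPureSubmodule R (LinearMap.range i) →
      Module.Injective R E → IsEssentialSubmodule R (LinearMap.range i) →
      IsFPInjective R (E ⧸ LinearMap.range i)) := by
  constructor
  · intro h E _ _ i hi hip _ _
    exact h E i hi hip isFPInjective_of_injective
  · intro h E _ _ i hi hip hE
    obtain ⟨H, _, _, j, hj, hH, hess⟩ := exists_injective_hull R U
    have hjp : IsPureSubmodule R (LinearMap.range j) := hip.range_of_isFPInjective hi hE hj
    exact hE.quotient_range_of_injective hi hj (h H j hj hjp hH hess)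

/-- For a module `U` over a ring `R`, the following are equivalent:
(1) for every FP-injective module `E` containing `U` as a pure submodule, `E/U` is
FP-injective; (2) for every injective hull `E` of `U` with `U` pure in `E`, `E/U`
is FP-injective. -/
theorem fp_injective_quotient_tfae (R : Type u) [Ring R]
    (U : Type u) [AddCommGroup U] [Module R U] :
    (∀ (E : Type u) [AddCommGroup E] [Module R E] (i : U →ₗ[R] E),
      Function.Injective i → IsPureSubmodule R (LinearMap.range i) →
      IsFPInjective R E → IsFPInjective R (E ⧸ LinearMap.range i)) ↔
    (∀ (E : Type u) [AddCommGroup E] [Module R E] (i : U →ₗ[R] E),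
      Function.Injective i → IsPureSubmodule R (LinearMap.range i) →
      Module.Injective R E → IsEssentialSubmodule R (LinearMap.range i) →
      IsFPInjective R (E ⧸ LinearMap.range i)) :=
  fp_injective_quotient_tfae_general R U
end

section
/- Let R be a ring admitting a family 𝔈 of orthogonal central idempotents such that R/R(1-e) is left pure-semisimple for each e ∈ 𝔈, and R/A is von Neumann regular where A = ⊕_{e∈𝔈} Re. Then every left R-module M with Ext¹_R(R/B, M) = 0 for every pure left ideal B of R is pure-injective. -/
/-!
Let `A = ⊕ Re`. An element of `A` is fixed by a finite sum of members of `𝔈`, and `R/A` is von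
Neumann regular, so every left ideal containing `A` is pure. The hypothesis on `M` therefore says
that `M` satisfies Baer's criterion for left ideals containing `A`. This has two consequences: a
family in `∏ eM` gives a linear map `A → M`, whose extension to `R` shows that `M → ∏ eM` is onto;
and the kernel of `M → ∏ eM`, being the submodule annihilated by `A`, is injective, since a map
from an ideal `I` into it vanishes on `I ∩ A` and so extends by zero to `I + A`. Hence `M` is the
product of an injective module and of the `eM`, which are modules over the pure-semisimple rings
`R/R(1-e)`.
-/

universe u v

section PureInjective

variable {R : Type u} [Ring R]

theorem IsPureInjective.of_baer {M : Type v} [AddCommGroup M] [Module R M]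
    (hM : Module.Baer R M) : IsPureInjective R M :=
  fun _ _ _ _ _ _ f hf _ g ↦ hM.extension_property f hf g

theorem IsPureInjective.of_linearEquiv {M N : Type v} [AddCommGroup M] [Module R M]
    [AddCommGroup N] [Module R N] (hM : IsPureInjective R M) (e : M ≃ₗ[R] N) :
    IsPureInjective R N := by
  intro A B _ _ _ _ f hf hpure g
  obtain ⟨h, hh⟩ := hM A B f hf hpure (e.symm ∘ₗ g)
  exact ⟨e ∘ₗ h, by rw [LinearMap.comp_assoc, hh]; ext; simp⟩

theorem IsPureInjective.prod {M N : Type v} [AddCommGroup M] [Module R M]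
    [AddCommGroup N] [Module R N] (hM : IsPureInjective R M) (hN : IsPureInjective R N) :
    IsPureInjective R (M × N) := by
  intro A B _ _ _ _ f hf hpure g
  obtain ⟨h₁, hh₁⟩ := hM A B f hf hpure (LinearMap.fst R M N ∘ₗ g)
  obtain ⟨h₂, hh₂⟩ := hN A B f hf hpure (LinearMap.snd R M N ∘ₗ g)
  exact ⟨h₁.prod h₂, by rw [LinearMap.prod_comp, hh₁, hh₂]; rfl⟩

theorem IsPureInjective.pi {ι : Type v} {M : ι → Type v} [∀ i, AddCommGroup (M i)]
    [∀ i, Module R (M i)] (hM : ∀ i, IsPureInjective R (M i)) :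
    IsPureInjective R (∀ i, M i) := by
  intro A B _ _ _ _ f hf hpure g
  choose h hh using fun i ↦ hM i A B f hf hpure (LinearMap.proj i ∘ₗ g)
  exact ⟨LinearMap.pi h, by rw [LinearMap.pi_comp]; ext a i; exact LinearMap.congr_fun (hh i) a⟩

theorem IsPureInjective.of_surjective_of_baer_ker {M P : Type v} [AddCommGroup M] [Module R M]
    [AddCommGroup P] [Module R P] (hP : IsPureInjective R P) (π : M →ₗ[R] P)
    (hπ : Function.Surjective π) (hker : Module.Baer R (LinearMap.ker π)) :
    IsPureInjective R M := by
  obtain ⟨ρ, hρ⟩ := hker.extension_property (LinearMap.ker π).subtype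
    (LinearMap.ker π).injective_subtype LinearMap.id
  have hρ_apply : ∀ k : LinearMap.ker π, ρ k = k := LinearMap.congr_fun hρ
  have hρ_range : LinearMap.range ρ = ⊤ := LinearMap.range_eq_top.2 fun k ↦ ⟨k, hρ_apply k⟩
  let splitting : M ≃ₗ[R] LinearMap.ker π × P :=
    LinearMap.equivProdOfSurjectiveOfIsCompl ρ π hρ_range (LinearMap.range_eq_top.2 hπ)
      (LinearMap.isCompl_of_proj hρ_apply).symm
  exact ((IsPureInjective.of_baer hker).prod hP).of_linearEquiv splitting.symm

end PureInjective

section ChangeOfRings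

variable {R : Type u} [Ring R] {Q : Type*} [Ring Q] {φ : R →+* Q}

/-- The structure of module over a quotient ring `Q` of `R` on an `R`-module annihilated by the
kernel of `φ : R → Q`. -/
noncomputable abbrev moduleOfSurjective (hφ : Function.Surjective φ) {X : Type v} [AddCommGroup X]
    [Module R X] (hX : ∀ r, φ r = 0 → ∀ x : X, r • x = 0) : Module Q X :=
  Module.compHom X (φ.liftOfSurjective hφ
    ⟨Module.toAddMonoidEnd R X, fun r hr ↦ AddMonoidHom.ext (hX r hr)⟩)

theorem moduleOfSurjective_map_smul (hφ : Function.Surjective φ) {X : Type v} [AddCommGroup X]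
    [Module R X] (hX : ∀ r, φ r = 0 → ∀ x : X, r • x = 0) (r : R) (x : X) :
    letI := moduleOfSurjective hφ hX
    φ r • x = r • x := by
  exact congrArg (fun ψ : AddMonoid.End X ↦ ψ x) <| φ.liftOfRightInverse_comp_apply _
    (Function.rightInverse_surjInv hφ)
    ⟨Module.toAddMonoidEnd R X, fun r hr ↦ AddMonoidHom.ext (hX r hr)⟩ r

/-- An `R`-linear map, regarded as linear over a ring `Q` onto which `R` maps. -/
def linearMapOfSurjective (hφ : Function.Surjective φ) {X : Type*} {Y : Type*}
    [AddCommGroup X] [Module R X] [Module Q X] [AddCommGroup Y] [Module R Y] [Module Q Y]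
    (hX : ∀ (r : R) (x : X), φ r • x = r • x) (hY : ∀ (r : R) (y : Y), φ r • y = r • y)
    (f : X →ₗ[R] Y) : X →ₗ[Q] Y where
  toFun := f
  map_add' := f.map_add
  map_smul' := hφ.forall.2 fun r x ↦ by simp [hX, hY]

theorem IsPureSubmodule.of_surjective (hφ : Function.Surjective φ) {X : Type v} [AddCommGroup X]
    [Module R X] [Module Q X] (hX : ∀ (r : R) (x : X), φ r • x = r • x)
    {N : Submodule R X} {N' : Submodule Q X} (hN : IsPureSubmodule R N)
    (hNN' : ∀ x, x ∈ N ↔ x ∈ N') : IsPureSubmodule Q N' := by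
  rintro k l a n ⟨x, hx⟩
  choose b hb using fun i j ↦ hφ (a i j)
  simp only [← hb, hX] at hx ⊢
  obtain ⟨y, hy⟩ := hN k l b (fun i ↦ ⟨n i, (hNN' _).2 (n i).2⟩) ⟨x, hx⟩
  exact ⟨fun j ↦ ⟨y j, (hNN' _).1 (y j).2⟩, hy⟩

theorem IsPureInjective.exists_extension_of_surjective {N : Type v} [AddCommGroup N] [Module R N]
    [Module Q N] (hN : IsPureInjective Q N) (hφ : Function.Surjective φ)
    (hsmul : ∀ (r : R) (n : N), φ r • n = r • n) {A B : Type v} [AddCommGroup A] [Module R A]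
    [AddCommGroup B] [Module R B] (hA : ∀ r, φ r = 0 → ∀ a : A, r • a = 0)
    (hB : ∀ r, φ r = 0 → ∀ b : B, r • b = 0) (f : A →ₗ[R] B) (hf : Function.Injective f)
    (hpure : IsPureSubmodule R (LinearMap.range f)) (g : A →ₗ[R] N) :
    ∃ h : B →ₗ[R] N, h ∘ₗ f = g := by
  let : Module Q A := moduleOfSurjective hφ hA
  let : Module Q B := moduleOfSurjective hφ hB
  have hAsmul := moduleOfSurjective_map_smul hφ hA
  have hBsmul := moduleOfSurjective_map_smul hφ hB
  obtain ⟨h, hh⟩ := hN A B (linearMapOfSurjective hφ hAsmul hBsmul f) hf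
    (hpure.of_surjective hφ hBsmul fun _ ↦ Iff.rfl) (linearMapOfSurjective hφ hAsmul hsmul g)
  refine ⟨{ toFun := h, map_add' := h.map_add, map_smul' := fun r b ↦ ?_ }, ?_⟩
  · rw [← hBsmul, map_smul, hsmul, RingHom.id_apply]
  · exact LinearMap.ext fun a ↦ LinearMap.congr_fun hh a

end ChangeOfRings

section CentralPart

variable {R : Type u} [Ring R] {e : R}

/-- The submodule `eX` of `X`, for `e` a central idempotent; it is encoded as the set of fixed
points of `e`, which is a submodule for every central `e`. -/
def centralPart (he : e ∈ Set.center R) (X : Type v) [AddCommGroup X] [Module R X] :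
    Submodule R X where
  carrier := {x | e • x = x}
  add_mem' {x y} hx hy := by rw [Set.mem_ofPred_eq, smul_add, hx, hy]
  zero_mem' := smul_zero e
  smul_mem' r x hx := by rw [Set.mem_ofPred_eq, smul_smul, (he.comm r).eq, mul_smul, hx]

variable (he : e ∈ Set.center R) {X Y : Type v} [AddCommGroup X] [Module R X] [AddCommGroup Y]
  [Module R Y]

@[simp]
theorem smul_coe_centralPart (x : centralPart he X) : e • (x : X) = x :=
  x.2

theorem smul_centralPart_eq_zero {r : R} (hr : e * r = 0) (x : centralPart he X) : r • x = 0 :=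
  Subtype.ext <| by
    rw [Submodule.coe_smul, ← smul_coe_centralPart he x, smul_smul, ← (he.comm r).eq, hr,
      zero_smul, Submodule.coe_zero]

/-- The projection `X → eX`, `x ↦ ex`. -/
def toCentralPart (hidem : IsIdempotentElem e) (X : Type v) [AddCommGroup X] [Module R X] :
    X →ₗ[R] centralPart he X where
  toFun x := ⟨e • x, show e • e • x = e • x by rw [smul_smul, hidem.eq]⟩
  map_add' x y := Subtype.ext (smul_add e x y)
  map_smul' r x := Subtype.ext <| by simp [smul_smul, (he.comm r).eq]

@[simp]
theorem coe_toCentralPart (hidem : IsIdempotentElem e) (x : X) :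
    (toCentralPart he hidem X x : X) = e • x :=
  rfl

/-- The restriction `eX → eY` of a linear map `X → Y`. -/
def centralPartMap (f : X →ₗ[R] Y) : centralPart he X →ₗ[R] centralPart he Y :=
  f.restrict fun x (hx : e • x = x) ↦ show e • f x = f x by rw [← map_smul, hx]

@[simp]
theorem coe_centralPartMap (f : X →ₗ[R] Y) (x : centralPart he X) :
    (centralPartMap he f x : Y) = f x :=
  rfl

theorem isPureSubmodule_range_centralPartMap (hidem : IsIdempotentElem e) (f : X →ₗ[R] Y)
    (hf : IsPureSubmodule R (LinearMap.range f)) :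
    IsPureSubmodule R (LinearMap.range (centralPartMap he f)) := by
  rintro k l a n ⟨y, hy⟩
  have hn : ∀ i, (n i : Y) ∈ LinearMap.range f := fun i ↦ by
    obtain ⟨x, hx⟩ := (n i).2
    exact ⟨x, congrArg Subtype.val hx⟩
  obtain ⟨z, hz⟩ := hf k l a (fun i ↦ ⟨n i, hn i⟩)
    ⟨fun j ↦ y j, fun i ↦ by simpa using congrArg Subtype.val (hy i)⟩
  choose x hx using fun j ↦ (z j).2
  refine ⟨fun j ↦ ⟨centralPartMap he f (toCentralPart he hidem X (x j)), _, rfl⟩, fun i ↦ ?_⟩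
  have hproj : toCentralPart he hidem Y (∑ j, a i j • (z j : Y)) = n i :=
    Subtype.ext (by simp [hz])
  rw [← hproj, map_sum]
  refine Finset.sum_congr rfl fun j _ ↦ ?_
  rw [map_smul, ← hx]
  exact congrArg _ (Subtype.ext (by simp))

/-- The hypotheses say that `φ` identifies `Q` with the factor `Re` of `R = Re × R(1-e)`. -/
theorem IsPureInjective.of_centralIdempotent (he : e ∈ Set.center R)
    {Q : Type*} [Ring Q] {φ : R →+* Q}
    (hφ : Function.Surjective φ) (hker : ∀ r, φ r = 0 ↔ e * r = 0) (hidem : IsIdempotentElem e)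
    {N : Type v} [AddCommGroup N] [Module R N] [Module Q N]
    (hsmul : ∀ (r : R) (n : N), φ r • n = r • n) (hN : IsPureInjective Q N) :
    IsPureInjective R N := by
  intro A B _ _ _ _ f hf hpure g
  have hφe : φ e = 1 := by
    have : φ (1 - e) = 0 := (hker _).2 hidem.mul_one_sub_self
    rw [map_sub, map_one, sub_eq_zero] at this
    exact this.symm
  obtain ⟨h, hh⟩ := hN.exists_extension_of_surjective hφ hsmul
    (fun r hr ↦ smul_centralPart_eq_zero he ((hker r).1 hr))
    (fun r hr ↦ smul_centralPart_eq_zero he ((hker r).1 hr)) (centralPartMap he f)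
    (fun x y hxy ↦ Subtype.ext (hf (congrArg Subtype.val hxy)))
    (isPureSubmodule_range_centralPartMap he hidem f hpure) (g ∘ₗ (centralPart he A).subtype)
  refine ⟨h ∘ₗ toCentralPart he hidem B, LinearMap.ext fun a ↦ ?_⟩
  have hfa : toCentralPart he hidem B (f a) =
      centralPartMap he f (toCentralPart he hidem A a) := Subtype.ext (by simp)
  calc h (toCentralPart he hidem B (f a))
      = g (e • a) := by rw [hfa]; exact LinearMap.congr_fun hh _
    _ = g a := by rw [map_smul, ← hsmul, hφe, one_smul]

theorem ringCon_mk'_eq_zero_iff_mul_eq_zero (he : e ∈ Set.center R)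
    (hidem : IsIdempotentElem e) (r : R) :
    (TwoSidedIdeal.span {1 - e} : TwoSidedIdeal R).ringCon.mk' r = 0 ↔ e * r = 0 := by
  rw [← TwoSidedIdeal.mem_ker, TwoSidedIdeal.ker_ringCon_mk']
  constructor
  · intro hr
    have hle : TwoSidedIdeal.span {1 - e} ≤
        TwoSidedIdeal.ker (Module.toAddMonoidEnd R (centralPart he R)) := by
      rw [TwoSidedIdeal.span_le, Set.singleton_subset_iff, SetLike.mem_coe, TwoSidedIdeal.mem_ker]
      exact AddMonoidHom.ext fun x ↦ Subtype.ext <| show (1 - e) • (x : R) = 0 by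
        rw [sub_smul, one_smul, smul_coe_centralPart, sub_self]
    have := DFunLike.congr_fun ((TwoSidedIdeal.mem_ker _).1 (hle hr)) ⟨e, hidem⟩
    rw [(he.comm r).eq]
    exact congrArg Subtype.val this
  · intro hr
    have : r = (1 - e) * r := by rw [sub_mul, hr, one_mul, sub_zero]
    rw [this]
    exact TwoSidedIdeal.mul_mem_right _ _ _ (TwoSidedIdeal.subset_span rfl)

theorem isPureInjective_centralPart (hidem : IsIdempotentElem e)
    (hpss : ∀ (N : Type v) [AddCommGroup N]
      [Module (TwoSidedIdeal.span {1 - e} : TwoSidedIdeal R).ringCon.Quotient N],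
      IsPureInjective (TwoSidedIdeal.span {1 - e} : TwoSidedIdeal R).ringCon.Quotient N)
    (X : Type v) [AddCommGroup X] [Module R X] : IsPureInjective R (centralPart he X) := by
  have hφ := (TwoSidedIdeal.span {1 - e} : TwoSidedIdeal R).ringCon.mk'_surjective
  have hker := ringCon_mk'_eq_zero_iff_mul_eq_zero he hidem
  have hkilled : ∀ r, _ → ∀ x : centralPart he X, r • x = 0 :=
    fun r hr ↦ smul_centralPart_eq_zero he ((hker r).1 hr)
  let := moduleOfSurjective hφ hkilled
  exact (hpss _).of_centralIdempotent he hφ hker hidem (moduleOfSurjective_map_smul hφ hkilled)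

end CentralPart

section Ext

variable {R : Type u} [Ring R]

theorem Ext1Vanishes.exists_extension {P M : Type v} [AddCommGroup P] [Module R P]
    [AddCommGroup M] [Module R M] {N : Submodule R P} (hN : Ext1Vanishes R (P ⧸ N) M)
    (φ : N →ₗ[R] M) : ∃ ψ : P →ₗ[R] M, ∀ n : N, ψ n = φ n := by
  -- `(P × M) ⧸ W` is the pushout of `N → P` and `φ`.
  let W : Submodule R (P × M) := (⟨N, -φ⟩ : P →ₗ.[R] M).graph
  let i : M →ₗ[R] (P × M) ⧸ W := W.mkQ ∘ₗ LinearMap.inr R P M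
  have hW : W ≤ LinearMap.ker (N.mkQ ∘ₗ LinearMap.fst R P M) := fun x hx ↦ by
    obtain ⟨n, hn, -⟩ := (LinearPMap.mem_graph_iff _).1 hx
    simp [← hn]
  let p : (P × M) ⧸ W →ₗ[R] P ⧸ N := W.liftQ _ hW
  have hi_eq : ∀ n : N, i (φ n) = W.mkQ (n, 0) := fun n ↦
    ((Submodule.Quotient.eq W).2 ((LinearPMap.mem_graph_iff _).2 ⟨n, by simp⟩)).symm
  have hi : Function.Injective i := (injective_iff_map_eq_zero i).2 fun m hm ↦
    LinearPMap.graph_fst_eq_zero_snd _ ((Submodule.Quotient.mk_eq_zero W).1 hm) rfl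
  have hp : Function.Surjective p := N.mkQ_surjective.forall.2 fun x ↦ ⟨W.mkQ (x, 0), rfl⟩
  have hexact : LinearMap.ker p = LinearMap.range i := by
    refine le_antisymm (fun y hy ↦ ?_) ?_
    · obtain ⟨⟨x, m⟩, rfl⟩ := W.mkQ_surjective y
      have hx : x ∈ N := (Submodule.Quotient.mk_eq_zero N).1 hy
      refine ⟨φ ⟨x, hx⟩ + m, ?_⟩
      rw [map_add, hi_eq, LinearMap.comp_apply, ← map_add]
      simp
    · rintro _ ⟨m, rfl⟩
      exact N.mkQ.map_zero
  obtain ⟨s, hs⟩ := hN _ i p hi hp hexact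
  refine ⟨s ∘ₗ W.mkQ ∘ₗ LinearMap.inl R P M, fun n ↦ ?_⟩
  exact (congrArg s (hi_eq n)).symm.trans (LinearMap.congr_fun hs (φ n))

end Ext

section RelativeBaer

variable {R : Type u} [Ring R]

/-- Baer's criterion for `M` restricted to the left ideals containing `A`. An extension to `R` of
a map `φ : I → M` is recorded as the image `m` of `1`. -/
def BaerAbove (A : Ideal R) (M : Type v) [AddCommGroup M] [Module R M] : Prop :=
  ∀ I : Ideal R, A ≤ I → ∀ φ : I →ₗ[R] M, ∃ m : M, ∀ x : I, φ x = (x : R) • m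

theorem isFlatMod_quotient_of_exists_mul_eq {B : Ideal R} (hB : ∀ b ∈ B, ∃ c ∈ B, b * c = b) :
    IsFlatMod R (R ⧸ B) := by
  intro k a x hx
  choose r hr using fun i ↦ B.mkQ_surjective (x i)
  have hb : ∑ i, a i * r i ∈ B := by
    rw [← Submodule.Quotient.mk_eq_zero B, ← hx, ← Submodule.mkQ_apply, map_sum]
    exact Finset.sum_congr rfl fun i _ ↦ by rw [← hr i, ← map_smul, smul_eq_mul]
  obtain ⟨c, hc, hbc⟩ := hB _ hb
  refine ⟨1, fun i _ ↦ r i * (1 - c), fun _ ↦ B.mkQ 1, fun i ↦ ?_, fun _ ↦ ?_⟩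
  · rw [Fin.sum_univ_one, ← map_smul, ← hr i]
    have hdiff : r i - (r i * (1 - c)) • 1 = r i * c := by
      rw [smul_eq_mul, mul_one, mul_sub, mul_one, sub_sub_cancel]
    exact (Submodule.Quotient.eq B).2 (hdiff ▸ B.mul_mem_left _ hc)
  · simp only [← mul_assoc]
    rw [← Finset.sum_mul, mul_sub, mul_one, hbc, sub_self]

theorem exists_mul_eq_of_le {A B : Ideal R} (hAB : A ≤ B) (hA : ∀ a ∈ A, ∃ f ∈ A, a * f = a)
    (hreg : ∀ a : R, ∃ x : R, a - a * x * a ∈ A) {b : R} (hb : b ∈ B) : ∃ c ∈ B, b * c = b := by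
  obtain ⟨x, hx⟩ := hreg b
  obtain ⟨f, hf, hxf⟩ := hA _ hx
  refine ⟨x * b + f - x * b * f, B.sub_mem (B.add_mem (B.mul_mem_left _ hb) (hAB hf))
    (B.mul_mem_left _ (hAB hf)), ?_⟩
  calc b * (x * b + f - x * b * f)
      = b * x * b + (b - b * x * b) * f := by noncomm_ring
    _ = b := by rw [hxf, add_sub_cancel]

theorem BaerAbove.of_ext1Vanishes {A : Ideal R} {M : Type u} [AddCommGroup M] [Module R M]
    (hA : ∀ a ∈ A, ∃ f ∈ A, a * f = a) (hreg : ∀ a : R, ∃ x : R, a - a * x * a ∈ A)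
    (hM : ∀ B : Ideal R, IsFlatMod R (R ⧸ B) → Ext1Vanishes R (R ⧸ B) M) : BaerAbove A M := by
  intro B hAB φ
  have hflat : IsFlatMod R (R ⧸ B) :=
    isFlatMod_quotient_of_exists_mul_eq fun _ hb ↦ exists_mul_eq_of_le hAB hA hreg hb
  obtain ⟨ψ, hψ⟩ := (hM B hflat).exists_extension φ
  exact ⟨ψ 1, fun x ↦ by rw [← hψ, ← map_smul, smul_eq_mul, mul_one]⟩

theorem BaerAbove.baer_of_mem_iff {A : Ideal R} {M : Type v} [AddCommGroup M] [Module R M]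
    (hM : BaerAbove A M) (hA : ∀ a ∈ A, ∃ f ∈ A, f * a = a) {K : Submodule R M}
    (hK : ∀ m, m ∈ K ↔ ∀ a ∈ A, a • m = 0) : Module.Baer R K := by
  intro I φ
  let φ' : R →ₗ.[R] K := ⟨I, φ⟩
  let zeroOnA : R →ₗ.[R] K := ⟨A, 0⟩
  have hagree : ∀ (x : φ'.domain) (y : zeroOnA.domain), (x : R) = y → φ' x = zeroOnA y := by
    rintro ⟨x, hxI⟩ ⟨_, hxA⟩ rfl
    obtain ⟨f, hf, hfx⟩ := hA x hxA
    have hx_eq : (⟨x, hxI⟩ : I) = f • ⟨x, hxI⟩ := Subtype.ext hfx.symm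
    change φ ⟨x, hxI⟩ = 0
    rw [hx_eq, map_smul]
    exact Subtype.ext ((hK _).1 (φ ⟨x, hxI⟩).2 f hf)
  obtain ⟨m, hm⟩ := hM (I ⊔ A) le_sup_right (K.subtype ∘ₗ (φ'.sup zeroOnA hagree).toFun)
  have hmK : m ∈ K := (hK m).2 fun a ha ↦ by
    rw [← hm ⟨a, Submodule.mem_sup_right ha⟩]
    exact congrArg Subtype.val
      ((LinearPMap.right_le_sup _ _ hagree).2 (x := ⟨a, ha⟩) rfl).symm
  refine ⟨LinearMap.toSpanSingleton R K ⟨m, hmK⟩, fun x hx ↦ Subtype.ext ?_⟩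
  have hφx := (LinearPMap.left_le_sup _ _ hagree).2 (x := ⟨x, hx⟩)
    (y := ⟨x, Submodule.mem_sup_left hx⟩) rfl
  exact (hm ⟨x, Submodule.mem_sup_left hx⟩).symm.trans (congrArg Subtype.val hφx).symm

end RelativeBaer

section OrthogonalCentralIdempotents

variable {R : Type u} [Ring R] {ι : Type*} {e : ι → R}

theorem exists_finset_mul_sum_eq (he : OrthogonalIdempotents e) {a : R}
    (ha : a ∈ Ideal.span (Set.range e)) : ∃ s : Finset ι, a * ∑ i ∈ s, e i = a := by
  obtain ⟨c, rfl⟩ := Finsupp.mem_span_range_iff_exists_finsupp.1 ha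
  refine ⟨c.support, ?_⟩
  rw [Finsupp.sum, Finset.sum_mul]
  exact Finset.sum_congr rfl fun i hi ↦ by
    rw [smul_eq_mul, mul_assoc, he.mul_sum_of_mem hi]

theorem exists_central_mul_eq (he : OrthogonalIdempotents e) (hc : ∀ i, e i ∈ Set.center R)
    {a : R} (ha : a ∈ Ideal.span (Set.range e)) :
    ∃ f ∈ Ideal.span (Set.range e), f ∈ Set.center R ∧ a * f = a := by
  obtain ⟨s, hs⟩ := exists_finset_mul_sum_eq he ha
  exact ⟨∑ i ∈ s, e i, sum_mem fun i _ ↦ Ideal.subset_span ⟨i, rfl⟩,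
    (Subring.center R).sum_mem fun i _ ↦ hc i, hs⟩

theorem finite_setOf_mul_ne_zero (he : OrthogonalIdempotents e) (hc : ∀ i, e i ∈ Set.center R)
    {a : R} (ha : a ∈ Ideal.span (Set.range e)) : {i | a * e i ≠ 0}.Finite := by
  obtain ⟨s, hs⟩ := exists_finset_mul_sum_eq he ha
  refine s.finite_toSet.subset fun i hi ↦ by_contra fun his ↦ hi ?_
  rw [← hs, mul_assoc, ← ((hc i).comm _).eq, he.mul_sum_of_notMem his, mul_zero]

theorem exists_linearMap_span_range_apply_eq (he : OrthogonalIdempotents e)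
    (hc : ∀ i, e i ∈ Set.center R) {M : Type v} [AddCommGroup M] [Module R M]
    (p : ∀ i, centralPart (hc i) M) :
    ∃ φ : Ideal.span (Set.range e) →ₗ[R] M, ∀ i, φ ⟨e i, Ideal.subset_span ⟨i, rfl⟩⟩ = p i := by
  have hsmul : ∀ (r : R) i, (r * e i) • (p i : M) = r • (p i : M) := fun r i ↦ by
    rw [mul_smul, smul_coe_centralPart]
  have hfin : ∀ a : Ideal.span (Set.range e),
      (Function.support fun i ↦ (a : R) • (p i : M)).Finite := fun a ↦
    (finite_setOf_mul_ne_zero he hc a.2).subset fun i hi h0 ↦ hi <| by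
      change (a : R) • (p i : M) = 0
      rw [← hsmul, h0, zero_smul]
  refine ⟨{ toFun a := ∑ᶠ i, (a : R) • (p i : M)
            map_add' a b := ?_
            map_smul' r a := ?_ }, fun i ↦ ?_⟩
  · rw [← finsum_add_distrib (hfin a) (hfin b)]
    simp only [Submodule.coe_add, add_smul]
  · rw [RingHom.id_apply, smul_finsum' r (hfin a)]
    simp only [Submodule.coe_smul, smul_eq_mul, mul_smul]
  · change ∑ᶠ j, e i • (p j : M) = p i
    rw [finsum_eq_single _ i, smul_coe_centralPart]
    intro j hj
    rw [← hsmul, he.ortho hj.symm, zero_smul]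

/-- The map `M → ∏ eM`. -/
def toCentralParts (he : OrthogonalIdempotents e) (hc : ∀ i, e i ∈ Set.center R) (M : Type v)
    [AddCommGroup M] [Module R M] : M →ₗ[R] ∀ i, centralPart (hc i) M :=
  LinearMap.pi fun i ↦ toCentralPart (hc i) (he.idem i) M

variable {M : Type v} [AddCommGroup M] [Module R M]

theorem mem_ker_toCentralParts (he : OrthogonalIdempotents e) (hc : ∀ i, e i ∈ Set.center R)
    (m : M) : m ∈ LinearMap.ker (toCentralParts he hc M) ↔
      ∀ a ∈ Ideal.span (Set.range e), a • m = 0 := by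
  have hker : m ∈ LinearMap.ker (toCentralParts he hc M) ↔ ∀ i, e i • m = 0 := by
    simp [toCentralParts, funext_iff, Subtype.ext_iff]
  have hspan : Ideal.span (Set.range e) ≤ LinearMap.ker (LinearMap.toSpanSingleton R M m) ↔
      ∀ i, e i • m = 0 := by
    simp [Ideal.span_le, Set.range_subset_iff]
  exact hker.trans hspan.symm

theorem toCentralParts_surjective (he : OrthogonalIdempotents e) (hc : ∀ i, e i ∈ Set.center R)
    (hM : BaerAbove (Ideal.span (Set.range e)) M) :
    Function.Surjective (toCentralParts he hc M) := by
  intro p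
  obtain ⟨φ, hφ⟩ := exists_linearMap_span_range_apply_eq he hc p
  obtain ⟨m, hm⟩ := hM _ le_rfl φ
  exact ⟨m, funext fun i ↦ Subtype.ext ((hm _).symm.trans (hφ i))⟩

theorem baer_ker_toCentralParts (he : OrthogonalIdempotents e) (hc : ∀ i, e i ∈ Set.center R)
    (hM : BaerAbove (Ideal.span (Set.range e)) M) :
    Module.Baer R (LinearMap.ker (toCentralParts he hc M)) := by
  refine hM.baer_of_mem_iff (fun a ha ↦ ?_) (mem_ker_toCentralParts he hc)
  obtain ⟨f, hf, hfc, hfa⟩ := exists_central_mul_eq he hc ha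
  exact ⟨f, hf, (hfc.comm a).eq.trans hfa⟩

end OrthogonalCentralIdempotents

theorem IsPureInjective.of_centralParts {R : Type u} [Ring R] {ι : Type v} {e : ι → R}
    (he : OrthogonalIdempotents e) (hc : ∀ i, e i ∈ Set.center R) {M : Type v} [AddCommGroup M]
    [Module R M] (hM : BaerAbove (Ideal.span (Set.range e)) M)
    (hparts : ∀ i, IsPureInjective R (centralPart (hc i) M)) : IsPureInjective R M :=
  (IsPureInjective.pi hparts).of_surjective_of_baer_ker (toCentralParts he hc M)
    (toCentralParts_surjective he hc hM) (baer_ker_toCentralParts he hc hM)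

/-- Suppose `R` has a family `𝔈` of orthogonal central idempotents such that
`R/R(1-e)` is left pure-semisimple for each `e ∈ 𝔈` and `R/A` is von Neumann regular where
`A = ⊕_{e ∈ 𝔈} Re`. Then every left `R`-module `M` with `Ext¹(R/B, M) = 0` for every pure
left ideal `B` is pure-injective. -/
theorem pure_injective_of_baer_for_pure_ideals (R : Type u) [Ring R] (Es : Set R)
    (hcent : ∀ e ∈ Es, e ∈ Set.center R)
    (hidem : ∀ e ∈ Es, IsIdempotentElem e)
    (horth : ∀ e ∈ Es, ∀ f ∈ Es, e ≠ f → e * f = 0)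
    (hpss : ∀ e ∈ Es, ∀ (M : Type u) [AddCommGroup M]
      [Module (TwoSidedIdeal.span {1 - e} : TwoSidedIdeal R).ringCon.Quotient M],
      IsPureInjective (TwoSidedIdeal.span {1 - e} : TwoSidedIdeal R).ringCon.Quotient M)
    (hvnr : ∀ a : R, ∃ x : R, a - a * x * a ∈ Ideal.span Es)
    (M : Type u) [AddCommGroup M] [Module R M]
    (hM : ∀ B : Ideal R, IsFlatMod R (R ⧸ B) → Ext1Vanishes R (R ⧸ B) M) :
    IsPureInjective R M := by
  let e : Es → R := Subtype.val
  have he : OrthogonalIdempotents e :=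
    ⟨fun i ↦ hidem i i.2, fun i j hij ↦ horth i i.2 j j.2 (Subtype.coe_injective.ne hij)⟩
  have hc : ∀ i, e i ∈ Set.center R := fun i ↦ hcent i i.2
  have hunit : ∀ a ∈ Ideal.span (Set.range e), ∃ f ∈ Ideal.span (Set.range e), a * f = a := by
    intro a ha
    obtain ⟨f, hf, -, haf⟩ := exists_central_mul_eq he hc ha
    exact ⟨f, hf, haf⟩
  have hreg : ∀ a : R, ∃ x : R, a - a * x * a ∈ Ideal.span (Set.range e) := by
    rwa [Subtype.range_coe]
  have hbaer : BaerAbove (Ideal.span (Set.range e)) M := .of_ext1Vanishes hunit hreg hM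
  exact .of_centralParts he hc hbaer fun i ↦
    isPureInjective_centralPart (hc i) (hidem i i.2) (hpss i i.2) M
end
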